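/- arXiv:2601.02847 — 4 statements merged into one kernel-verified Lean document; each statement's English description precedes it below -/
import Mathlib

section
/- Let E be a real Banach space, let T > 0, let N be a positive integer, let τ = T/N, and set t_k = kτ for k = 0, 1, …, N. If f : ℝ → E is twice continuously differentiable on [0, T], then τ · Σ_{k=1}^{N} ‖(f(t_k) − f(t_{k−1}))/τ − f′(t_k)‖² ≤ (τ²/3) · ∫₀^T ‖f″(t)‖² dt. -/
/-!
On a cell `[a, b]` the primitive of `(t - a) f''(t)` is `(t - a) f'(t) - f(t)`, so the error of the
backward difference quotient at `b` is `-(b - a)⁻¹ ∫ (t - a) f''(t) dt`. By Cauchy–Schwarz and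
`∫ (t - a)² = (b - a)³ / 3`, its square is at most `(b - a) / 3 * ∫ ‖f''‖²`
(`sq_norm_backward_error_le`). Summing over the cells of the grid gives the estimate.
-/

open MeasureTheory Set

/-- Cauchy–Schwarz against the weight `t - a`, whose squared `L²` norm is `(b - a)³ / 3`. -/
lemma sq_integral_sub_mul_le {a b : ℝ} (hab : a < b) {h : ℝ → ℝ} (hh : ContinuousOn h (Icc a b)) :
    (∫ t in a..b, (t - a) * h t) ^ 2 ≤ (b - a) ^ 3 / 3 * ∫ t in a..b, h t ^ 2 := by
  have hI : IntervalIntegrable (fun t => (t - a) * h t) volume a b := by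
    apply ContinuousOn.intervalIntegrable_of_Icc hab.le
    fun_prop
  have hJ : IntervalIntegrable (fun t => h t ^ 2) volume a b := by
    apply ContinuousOn.intervalIntegrable_of_Icc hab.le
    fun_prop
  have hW : IntervalIntegrable (fun t => (t - a) ^ 2) volume a b :=
    Continuous.intervalIntegrable (by fun_prop) _ _
  have hw : ∫ t in a..b, (t - a) ^ 2 = (b - a) ^ 3 / 3 := by
    rw [intervalIntegral.integral_comp_sub_right (fun t => t ^ 2) a, integral_pow]
    norm_num
  set I := ∫ t in a..b, (t - a) * h t with hIdef
  set J := ∫ t in a..b, h t ^ 2 with hJdef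
  have hpos : 0 < (b - a) ^ 3 / 3 := by have := sub_pos.2 hab; positivity
  set W := (b - a) ^ 3 / 3
  -- The squared norm of `h` minus its projection `(I / W) (t - a)` is nonnegative.
  have key : 0 ≤ ∫ t in a..b, ((I / W) * (t - a) - h t) ^ 2 :=
    intervalIntegral.integral_nonneg hab.le fun t _ => sq_nonneg _
  have expand : ∫ t in a..b, ((I / W) * (t - a) - h t) ^ 2
      = (I / W) ^ 2 * W - 2 * (I / W) * I + J := by
    rw [← hw, hIdef, hJdef, ← intervalIntegral.integral_const_mul,
      ← intervalIntegral.integral_const_mul,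
      ← intervalIntegral.integral_sub (hW.const_mul _) (hI.const_mul _),
      ← intervalIntegral.integral_add ((hW.const_mul _).sub (hI.const_mul _)) hJ]
    congr 1
    ext t
    ring
  rw [expand] at key
  have e : W * ((I / W) ^ 2 * W - 2 * (I / W) * I + J) = W * J - I ^ 2 := by
    field_simp
    ring
  have := mul_nonneg hpos.le key
  linarith

/-- One-cell estimate: `f₁` and `f₂` play the roles of `f'` and `f''`. Differentiability is only
needed in the open cell, so one-sided derivatives at the end points of `[0, T]` cause no trouble. -/
lemma sq_norm_backward_error_le {E : Type*} [NormedAddCommGroup E] [NormedSpace ℝ E]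
    [CompleteSpace E] {a b : ℝ} (hab : a < b) {f f₁ f₂ : ℝ → E}
    (hf : ContinuousOn f (Icc a b)) (hf₁ : ContinuousOn f₁ (Icc a b))
    (hf₂ : ContinuousOn f₂ (Icc a b))
    (hd : ∀ t ∈ Ioo a b, HasDerivAt f (f₁ t) t) (hd₁ : ∀ t ∈ Ioo a b, HasDerivAt f₁ (f₂ t) t) :
    ‖(b - a)⁻¹ • (f b - f a) - f₁ b‖ ^ 2 ≤ (b - a) / 3 * ∫ t in a..b, ‖f₂ t‖ ^ 2 := by
  have hpos : 0 < b - a := sub_pos.2 hab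
  have hrem : ∫ t in a..b, (t - a) • f₂ t = (b - a) • f₁ b - (f b - f a) := by
    rw [intervalIntegral.integral_eq_sub_of_hasDerivAt_of_le hab.le
      (f := fun t => (t - a) • f₁ t - f t) (by fun_prop)]
    · simp only [sub_self, zero_smul]
      abel
    · intro t ht
      have := (((hasDerivAt_id t).sub_const a).smul (hd₁ t ht)).sub (hd t ht)
      convert this using 1
      · rfl
      · simp
    · apply ContinuousOn.intervalIntegrable_of_Icc hab.le
      fun_prop
  have herr : (b - a)⁻¹ • (f b - f a) - f₁ b = -((b - a)⁻¹ • ∫ t in a..b, (t - a) • f₂ t) := by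
    rw [hrem, smul_sub _ ((b - a) • f₁ b), inv_smul_smul₀ hpos.ne']
    abel
  have hnorm : ‖∫ t in a..b, (t - a) • f₂ t‖ ≤ ∫ t in a..b, (t - a) * ‖f₂ t‖ := by
    refine (intervalIntegral.norm_integral_le_integral_norm hab.le).trans_eq ?_
    apply intervalIntegral.integral_congr
    intro t ht
    rw [uIcc_of_le hab.le] at ht
    simp only [norm_smul, Real.norm_eq_abs, abs_of_nonneg (sub_nonneg.2 ht.1)]
  have hcs := sq_integral_sub_mul_le hab hf₂.norm
  calc ‖(b - a)⁻¹ • (f b - f a) - f₁ b‖ ^ 2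
      = (b - a)⁻¹ ^ 2 * ‖∫ t in a..b, (t - a) • f₂ t‖ ^ 2 := by
        rw [herr, norm_neg, norm_smul, mul_pow, norm_inv, Real.norm_eq_abs, abs_of_pos hpos]
    _ ≤ (b - a)⁻¹ ^ 2 * ((b - a) ^ 3 / 3 * ∫ t in a..b, ‖f₂ t‖ ^ 2) := by
        gcongr
        exact (pow_le_pow_left₀ (norm_nonneg _) hnorm 2).trans hcs
    _ = (b - a) / 3 * ∫ t in a..b, ‖f₂ t‖ ^ 2 := by
        field_simp

/-- Backward-difference consistency estimate (Lemma A.1, (edts1)):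
for a uniform grid `t_k = k τ` with `τ = T / N`, the squared errors of the
backward difference quotients against the derivative at the right node,
summed over the grid and multiplied by `τ`, are controlled by
`(τ²/3) ∫₀ᵀ ‖f''‖²`. -/
theorem backward_difference_consistency
    (E : Type*) [NormedAddCommGroup E] [NormedSpace ℝ E] [CompleteSpace E]
    (T : ℝ) (hT : 0 < T) (N : ℕ) (hN : 0 < N) (τ : ℝ) (hτ : τ = T / N)
    (f : ℝ → E) (hf : ContDiffOn ℝ 2 f (Icc 0 T)) :
    τ * ∑ k ∈ Finset.Icc 1 N,
        ‖(τ⁻¹ : ℝ) • (f ((k : ℝ) * τ) - f (((k : ℝ) - 1) * τ))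
            - derivWithin f (Icc 0 T) ((k : ℝ) * τ)‖ ^ 2
      ≤ τ ^ 2 / 3 * ∫ t in (0:ℝ)..T, ‖iteratedDerivWithin 2 f (Icc 0 T) t‖ ^ 2 := by
  have hN' : (0 : ℝ) < N := by exact_mod_cast hN
  have hτpos : 0 < τ := by rw [hτ]; positivity
  have hNτ : (N : ℝ) * τ = T := by rw [hτ]; field_simp
  have hu : UniqueDiffOn ℝ (Icc 0 T) := uniqueDiffOn_Icc hT
  have hf₂ : ContinuousOn (iteratedDerivWithin 2 f (Icc 0 T)) (Icc 0 T) :=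
    hf.continuousOn_iteratedDerivWithin (by norm_num) hu
  have hf₁ : ContDiffOn ℝ 1 (derivWithin f (Icc 0 T)) (Icc 0 T) :=
    hf.derivWithin hu (by norm_num)
  have hd : ∀ t ∈ Ioo 0 T, HasDerivAt f (derivWithin f (Icc 0 T) t) t := fun t ht =>
    ((hf.differentiableOn (by norm_num)) t (Ioo_subset_Icc_self ht)).hasDerivWithinAt.hasDerivAt
      (Icc_mem_nhds ht.1 ht.2)
  have hd₁ : ∀ t ∈ Ioo 0 T,
      HasDerivAt (derivWithin f (Icc 0 T)) (iteratedDerivWithin 2 f (Icc 0 T) t) t := by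
    intro t ht
    have h2 : iteratedDerivWithin 2 f (Icc 0 T) t
        = derivWithin (derivWithin f (Icc 0 T)) (Icc 0 T) t := by
      rw [iteratedDerivWithin_succ', iteratedDerivWithin_one]
    rw [h2]
    exact ((hf₁.differentiableOn (by norm_num)) t
      (Ioo_subset_Icc_self ht)).hasDerivWithinAt.hasDerivAt (Icc_mem_nhds ht.1 ht.2)
  have hcell : ∀ k < N, 0 ≤ (k : ℝ) * τ ∧ (k : ℝ) * τ < ((k + 1 : ℕ) : ℝ) * τ ∧
      ((k + 1 : ℕ) : ℝ) * τ ≤ T := by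
    intro k hk
    refine ⟨by positivity, ?_, ?_⟩
    · gcongr
      omega
    · rw [← hNτ]
      gcongr
      omega
  have hsum : ∑ k ∈ Finset.range N, ∫ t in ((k : ℝ) * τ)..(((k + 1 : ℕ) : ℝ) * τ),
        ‖iteratedDerivWithin 2 f (Icc 0 T) t‖ ^ 2
      = ∫ t in (0 : ℝ)..T, ‖iteratedDerivWithin 2 f (Icc 0 T) t‖ ^ 2 := by
    rw [intervalIntegral.sum_integral_adjacent_intervals (a := fun k : ℕ => (k : ℝ) * τ)]
    · simp [hNτ]
    · intro k hk
      obtain ⟨h0, h1, h2⟩ := hcell k hk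
      exact ((hf₂.norm.pow 2).mono (Icc_subset_Icc h0 h2)).intervalIntegrable_of_Icc h1.le
  rw [← hsum, Finset.mul_sum, Finset.mul_sum, ← Finset.Ico_add_one_right_eq_Icc,
    Finset.range_eq_Ico, ← Finset.sum_Ico_add' _ 0 N 1]
  refine Finset.sum_le_sum fun k hk => ?_
  obtain ⟨h0, h1, h2⟩ := hcell k (Finset.mem_Ico.1 hk).2
  have hsub := Icc_subset_Icc h0 h2
  have hsubo := Ioo_subset_Ioo h0 h2
  have hloc := sq_norm_backward_error_le h1 (hf.continuousOn.mono hsub)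
    (hf₁.continuousOn.mono hsub) (hf₂.mono hsub) (fun t ht => hd t (hsubo ht))
    (fun t ht => hd₁ t (hsubo ht))
  have hlen : ((k + 1 : ℕ) : ℝ) * τ - (k : ℝ) * τ = τ := by push_cast; ring
  have hprev : ((k + 1 : ℕ) : ℝ) - 1 = k := by push_cast; ring
  rw [hlen] at hloc
  rw [hprev]
  calc _ ≤ τ * (τ / 3 * _) := mul_le_mul_of_nonneg_left hloc hτpos.le
    _ = _ := by ring
end

section
/- Let E be a real Banach space, let T > 0, let N be a positive integer, and let τ > 0 satisfy (N+1)τ ≤ T; set t_k = kτ for k = 0, 1, …, N+1. If f : ℝ → E is twice continuously differentiable on [0, T], then τ · Σ_{k=1}^{N} ‖(f(t_{k+1}) − f(t_k))/τ − f′(t_k)‖² ≤ (τ²/3) · ∫₀^T ‖f″(t)‖² dt. -/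
/-!
On a single cell `[a, b]` Taylor's formula with integral remainder reads
`f b - f a - (b - a) • f' a = ∫ t in a..b, (b - t) • f'' t`, so by the Cauchy–Schwarz inequality
and `∫ t in a..b, (b - t) ^ 2 = (b - a) ^ 3 / 3` the squared norm of the left-hand side is at most
`(b - a) ^ 3 / 3 * ∫ t in a..b, ‖f'' t‖ ^ 2` (`taylor_remainder_sq_le`). Dividing by `τ = b - a` and
summing over the cells `[k τ, (k + 1) τ]`, which are non-overlapping and contained in `[0, T]`, gives
the claim.
-/

open MeasureTheory Set

theorem integral_sub_sq (a b : ℝ) : ∫ t in a..b, (b - t) ^ 2 = (b - a) ^ 3 / 3 := by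
  rw [intervalIntegral.integral_comp_sub_left (fun t => t ^ 2) b, integral_pow]
  norm_num

/-- The Cauchy–Schwarz inequality on `[a, b]` against the weight `b - t`. -/
theorem integral_weight_mul_sq_le {a b : ℝ} (hab : a < b) {u : ℝ → ℝ}
    (hu : ContinuousOn u (Icc a b)) :
    (∫ t in a..b, (b - t) * u t) ^ 2 ≤ (b - a) ^ 3 / 3 * ∫ t in a..b, u t ^ 2 := by
  have hw : ContinuousOn (fun t : ℝ => b - t) (Icc a b) := by fun_prop
  have i1 : IntervalIntegrable (fun t => u t ^ 2) volume a b :=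
    (hu.pow 2).intervalIntegrable_of_Icc hab.le
  have i2 : IntervalIntegrable (fun t => (b - t) * u t) volume a b :=
    (hw.mul hu).intervalIntegrable_of_Icc hab.le
  have i3 : IntervalIntegrable (fun t => (b - t) ^ 2) volume a b :=
    (hw.pow 2).intervalIntegrable_of_Icc hab.le
  set A := ∫ t in a..b, (b - t) * u t with hA
  set U := ∫ t in a..b, u t ^ 2 with hU
  have hc : 0 < (b - a) ^ 3 / 3 := by
    have : 0 < b - a := sub_pos.2 hab
    positivity
  set c := (b - a) ^ 3 / 3 with hcdef
  -- `A / c` minimises the quadratic `l ↦ ∫ (u t - l (b - t)) ^ 2`.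
  have key : 0 ≤ ∫ t in a..b, (u t - A / c * (b - t)) ^ 2 :=
    intervalIntegral.integral_nonneg hab.le fun t _ => sq_nonneg _
  have expand : ∫ t in a..b, (u t - A / c * (b - t)) ^ 2
      = U - 2 * (A / c) * A + (A / c) ^ 2 * c := by
    have : (fun t => (u t - A / c * (b - t)) ^ 2) = fun t =>
        u t ^ 2 - 2 * (A / c) * ((b - t) * u t) + (A / c) ^ 2 * (b - t) ^ 2 := by
      funext t; ring
    rw [this, intervalIntegral.integral_add (i1.sub (i2.const_mul _)) (i3.const_mul _),
      intervalIntegral.integral_sub i1 (i2.const_mul _), intervalIntegral.integral_const_mul,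
      intervalIntegral.integral_const_mul, integral_sub_sq]
  rw [expand] at key
  have h2 : c * (U - 2 * (A / c) * A + (A / c) ^ 2 * c) = c * U - A ^ 2 := by
    field_simp; ring
  have := mul_nonneg hc.le key
  linarith

/-- The first-order Taylor remainder of `f` (with `g = f'`, `h = f''`) bounded by the `L²` norm
of the second derivative. -/
theorem taylor_remainder_sq_le {E : Type*} [NormedAddCommGroup E] [NormedSpace ℝ E]
    [CompleteSpace E] {a b : ℝ} (hab : a < b) {f g h : ℝ → E}
    (hf : ContinuousOn f (Icc a b)) (hg : ContinuousOn g (Icc a b))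
    (hh : ContinuousOn h (Icc a b)) (hfg : ∀ t ∈ Ioo a b, HasDerivAt f (g t) t)
    (hgh : ∀ t ∈ Ioo a b, HasDerivAt g (h t) t) :
    ‖f b - f a - (b - a) • g a‖ ^ 2 ≤ (b - a) ^ 3 / 3 * ∫ t in a..b, ‖h t‖ ^ 2 := by
  have hw : ContinuousOn (fun t : ℝ => b - t) (Icc a b) := by fun_prop
  have taylor : ∫ t in a..b, (b - t) • h t = f b - f a - (b - a) • g a := by
    -- `t ↦ f t + (b - t) • f' t` is a primitive of the integrand.
    rw [intervalIntegral.integral_eq_sub_of_hasDerivAt_of_le hab.le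
      (f := fun t => f t + (b - t) • g t) (f' := fun t => (b - t) • h t) (hf.add (hw.smul hg)) ?_
      ((hw.smul hh).intervalIntegrable_of_Icc hab.le)]
    · simp only [sub_self, zero_smul, add_zero]; abel
    · intro t ht
      have h1 : HasDerivAt (fun t : ℝ => b - t) (-1) t := (hasDerivAt_id t).const_sub b
      refine ((hfg t ht).add (h1.smul (hgh t ht))).congr_deriv ?_
      rw [neg_one_smul]; abel
  have hle : ‖f b - f a - (b - a) • g a‖ ≤ ∫ t in a..b, (b - t) * ‖h t‖ := by
    rw [← taylor]
    refine (intervalIntegral.norm_integral_le_integral_norm hab.le).trans_eq ?_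
    refine intervalIntegral.integral_congr fun t ht => ?_
    rw [uIcc_of_le hab.le] at ht
    simp only [norm_smul, Real.norm_eq_abs, abs_of_nonneg (sub_nonneg.2 ht.2)]
  exact (pow_le_pow_left₀ (norm_nonneg _) hle 2).trans (integral_weight_mul_sq_le hab hh.norm)

/-- Forward (shifted) difference consistency estimate (Lemma A.1, (edts2)):
for a uniform grid `t_k = k τ` with `(N+1) τ ≤ T`, the squared errors of the
forward difference quotients against the derivative at the left node,
summed over the grid and multiplied by `τ`, are controlled by
`(τ²/3) ∫₀ᵀ ‖f''‖²`. -/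
theorem forward_difference_consistency
    (E : Type*) [NormedAddCommGroup E] [NormedSpace ℝ E] [CompleteSpace E]
    (T : ℝ) (hT : 0 < T) (N : ℕ) (hN : 0 < N) (τ : ℝ) (hτpos : 0 < τ)
    (hτ : ((N : ℝ) + 1) * τ ≤ T)
    (f : ℝ → E) (hf : ContDiffOn ℝ 2 f (Icc 0 T)) :
    τ * ∑ k ∈ Finset.Icc 1 N,
        ‖(τ⁻¹ : ℝ) • (f (((k : ℝ) + 1) * τ) - f ((k : ℝ) * τ))
            - derivWithin f (Icc 0 T) ((k : ℝ) * τ)‖ ^ 2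
      ≤ τ ^ 2 / 3 * ∫ t in (0:ℝ)..T, ‖iteratedDerivWithin 2 f (Icc 0 T) t‖ ^ 2 := by
  have hU : UniqueDiffOn ℝ (Icc 0 T) := uniqueDiffOn_Icc hT
  set g := derivWithin f (Icc 0 T) with hg
  set h := iteratedDerivWithin 2 f (Icc 0 T) with hh
  have hhg : h = derivWithin g (Icc 0 T) := by
    rw [hh, iteratedDerivWithin_succ']
    funext t
    rw [iteratedDerivWithin_one]
  have hgC : ContDiffOn ℝ 1 g (Icc 0 T) := hf.derivWithin hU (by norm_num)
  have hhc : ContinuousOn h (Icc 0 T) := hf.continuousOn_iteratedDerivWithin le_rfl hU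
  have dfg : ∀ t ∈ Ioo 0 T, HasDerivAt f (g t) t := fun t ht =>
    ((hf.differentiableOn (by norm_num)) t (Ioo_subset_Icc_self ht)).hasDerivWithinAt.hasDerivAt
      (Icc_mem_nhds ht.1 ht.2)
  have dgh : ∀ t ∈ Ioo 0 T, HasDerivAt g (h t) t := fun t ht => by
    rw [hhg]
    exact ((hgC.differentiableOn (by norm_num)) t
      (Ioo_subset_Icc_self ht)).hasDerivWithinAt.hasDerivAt (Icc_mem_nhds ht.1 ht.2)
  have cell : ∀ k ∈ Finset.Ico 1 (N + 1), 0 ≤ (k : ℝ) * τ ∧ (k : ℝ) * τ < ((k : ℝ) + 1) * τ ∧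
      ((k : ℝ) + 1) * τ ≤ T := by
    intro k hk
    have hkN : (k : ℝ) ≤ N := by exact_mod_cast Nat.lt_succ_iff.1 (Finset.mem_Ico.1 hk).2
    refine ⟨by positivity, by nlinarith, le_trans ?_ hτ⟩
    gcongr
  have hsq : ContinuousOn (fun t => ‖h t‖ ^ 2) (Icc 0 T) := hhc.norm.pow 2
  have step : ∀ k ∈ Finset.Ico 1 (N + 1),
      τ * ‖(τ⁻¹ : ℝ) • (f (((k : ℝ) + 1) * τ) - f ((k : ℝ) * τ)) - g ((k : ℝ) * τ)‖ ^ 2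
        ≤ τ ^ 2 / 3 * ∫ t in ((k : ℝ) * τ)..(((k : ℝ) + 1) * τ), ‖h t‖ ^ 2 := by
    intro k hk
    obtain ⟨h0, hlt, h1⟩ := cell k hk
    have sub := Icc_subset_Icc h0 h1
    have sub' := Ioo_subset_Ioo h0 h1
    have main := taylor_remainder_sq_le hlt (hf.continuousOn.mono sub) (hgC.continuousOn.mono sub)
      (hhc.mono sub) (fun t ht => dfg t (sub' ht)) (fun t ht => dgh t (sub' ht))
    have hd : ((k : ℝ) + 1) * τ - k * τ = τ := by ring
    rw [hd] at main
    have e : (τ⁻¹ : ℝ) • (f (((k : ℝ) + 1) * τ) - f ((k : ℝ) * τ)) - g ((k : ℝ) * τ)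
        = τ⁻¹ • (f (((k : ℝ) + 1) * τ) - f ((k : ℝ) * τ) - τ • g ((k : ℝ) * τ)) := by
      rw [smul_sub _ (_ - _), inv_smul_smul₀ hτpos.ne']
    rw [e, norm_smul, Real.norm_eq_abs, abs_of_pos (inv_pos.2 hτpos), mul_pow]
    calc _ = τ⁻¹ * ‖f (((k : ℝ) + 1) * τ) - f ((k : ℝ) * τ) - τ • g ((k : ℝ) * τ)‖ ^ 2 := by
          field_simp
      _ ≤ τ⁻¹ * (τ ^ 3 / 3 * ∫ t in ((k : ℝ) * τ)..(((k : ℝ) + 1) * τ), ‖h t‖ ^ 2) := by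
          gcongr
      _ = _ := by field_simp
  have hadj : ∑ k ∈ Finset.Ico 1 (N + 1), ∫ t in ((k : ℝ) * τ)..(((k : ℝ) + 1) * τ), ‖h t‖ ^ 2
      = ∫ t in τ..(((N : ℝ) + 1) * τ), ‖h t‖ ^ 2 := by
    have := intervalIntegral.sum_integral_adjacent_intervals_Ico (μ := volume)
      (f := fun t => ‖h t‖ ^ 2) (a := fun k : ℕ => (k : ℝ) * τ) (m := 1) (n := N + 1) (by omega)
      (fun k hk => by
        obtain ⟨h0, hlt, h1⟩ := cell k (Finset.mem_Ico.2 hk)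
        push_cast
        exact (hsq.mono (Icc_subset_Icc h0 h1)).intervalIntegrable_of_Icc hlt.le)
    simpa using this
  have hτN : τ ≤ ((N : ℝ) + 1) * τ := by
    have : (0 : ℝ) ≤ N * τ := by positivity
    linarith
  have hmono : ∫ t in τ..(((N : ℝ) + 1) * τ), ‖h t‖ ^ 2 ≤ ∫ t in (0:ℝ)..T, ‖h t‖ ^ 2 :=
    intervalIntegral.integral_mono_interval hτpos.le hτN hτ
      (Filter.Eventually.of_forall fun t => sq_nonneg _) (hsq.intervalIntegrable_of_Icc hT.le)
  have hIcc : Finset.Icc 1 N = Finset.Ico 1 (N + 1) := by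
    ext k; simp only [Finset.mem_Icc, Finset.mem_Ico]; omega
  rw [hIcc, Finset.mul_sum]
  refine (Finset.sum_le_sum step).trans ?_
  rw [← Finset.mul_sum, hadj]
  gcongr
end

section
/- Let E be a real Banach space and let s < t be real numbers. If f : ℝ → E is twice continuously differentiable on [s, t], then ‖(f(t) − f(s))/(t − s) − f′(t)‖ ≤ √((t − s)/3) · ( ∫ₛᵗ ‖f″(r)‖² dr )^{1/2}. -/
open MeasureTheory Set

/-!
The function `G r = f r - (r - s) • f' r` has derivative `-(r - s) • f'' r`, so
`f t - f s - (t - s) • f' t = G t - G s = -∫ (r - s) • f'' r`: this is the Taylor remainder of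
`f` at `t`. Its norm is at most `A = ∫ (r - s) * ‖f'' r‖`, and Cauchy–Schwarz with
`∫ (r - s) ^ 2 = (t - s) ^ 3 / 3` gives `A ^ 2 ≤ (t - s) ^ 3 / 3 * ∫ ‖f''‖ ^ 2`
(`sq_integral_sub_mul_le`). Dividing by `(t - s) ^ 2` yields the bound.
-/

/-- The Cauchy–Schwarz inequality on `[s, t]` against the weight `r - s`. -/
lemma sq_integral_sub_mul_le_s2 {s t : ℝ} (hst : s < t) {g : ℝ → ℝ}
    (hg : ContinuousOn g (Icc s t)) :
    (∫ r in s..t, (r - s) * g r) ^ 2 ≤ (t - s) ^ 3 / 3 * ∫ r in s..t, g r ^ 2 := by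
  have hL : 0 < (t - s) ^ 3 := pow_pos (sub_pos.2 hst) 3
  have hw : ContinuousOn (fun r : ℝ => r - s) (Icc s t) := by fun_prop
  set A := ∫ r in s..t, (r - s) * g r with hA
  set B := ∫ r in s..t, g r ^ 2 with hB
  have i1 : IntervalIntegrable (fun r => g r ^ 2) volume s t :=
    (hg.pow 2).intervalIntegrable_of_Icc hst.le
  have i2 : IntervalIntegrable (fun r => (r - s) * g r) volume s t :=
    (hw.mul hg).intervalIntegrable_of_Icc hst.le
  have i3 : IntervalIntegrable (fun r => (r - s) ^ 2) volume s t :=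
    (hw.pow 2).intervalIntegrable_of_Icc hst.le
  have hW : ∫ r in s..t, (r - s) ^ 2 = (t - s) ^ 3 / 3 := by
    rw [intervalIntegral.integral_comp_sub_right (fun x => x ^ 2) s, integral_pow]
    norm_num
  -- `c` minimises the quadratic polynomial `c ↦ ∫ (g r - c * (r - s)) ^ 2`.
  let c := 3 * A / (t - s) ^ 3
  have key : 0 ≤ B - 2 * c * A + c ^ 2 * ((t - s) ^ 3 / 3) := by
    have h0 : 0 ≤ ∫ r in s..t, (g r - c * (r - s)) ^ 2 :=
      intervalIntegral.integral_nonneg hst.le fun r _ => sq_nonneg _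
    have h1 : ∫ r in s..t, (g r - c * (r - s)) ^ 2
        = ∫ r in s..t, (g r ^ 2 - 2 * c * ((r - s) * g r) + c ^ 2 * (r - s) ^ 2) := by
      congr 1 with r
      ring
    rwa [h1, intervalIntegral.integral_add (i1.sub (i2.const_mul _)) (i3.const_mul _),
      intervalIntegral.integral_sub i1 (i2.const_mul _), intervalIntegral.integral_const_mul,
      intervalIntegral.integral_const_mul, hW] at h0
  have hc : B - 2 * c * A + c ^ 2 * ((t - s) ^ 3 / 3) = B - 3 * A ^ 2 / (t - s) ^ 3 := by
    simp only [c]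
    field_simp
    ring
  rw [hc, sub_nonneg, div_le_iff₀ hL] at key
  linarith

/-- Single-step backward difference estimate: the error of the difference
quotient `(f t - f s)/(t - s)` against `f'` at the right endpoint `t` is
bounded by `√((t-s)/3)` times the `L²` norm of `f''` on `[s, t]`. -/
theorem single_step_backward_difference
    (E : Type*) [NormedAddCommGroup E] [NormedSpace ℝ E] [CompleteSpace E]
    (s t : ℝ) (hst : s < t)
    (f : ℝ → E) (hf : ContDiffOn ℝ 2 f (Icc s t)) :
    ‖(t - s)⁻¹ • (f t - f s) - derivWithin f (Icc s t) t‖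
      ≤ Real.sqrt ((t - s) / 3)
        * Real.sqrt (∫ r in s..t, ‖iteratedDerivWithin 2 f (Icc s t) r‖ ^ 2) := by
  have hL : 0 < t - s := sub_pos.2 hst
  have hu : UniqueDiffOn ℝ (Icc s t) := uniqueDiffOn_Icc hst
  have hf1 : DifferentiableOn ℝ f (Icc s t) := hf.differentiableOn (by norm_num)
  have hf'c : ContDiffOn ℝ 1 (derivWithin f (Icc s t)) (Icc s t) :=
    hf.derivWithin hu (by norm_num)
  have h2 : iteratedDerivWithin 2 f (Icc s t)
      = derivWithin (derivWithin f (Icc s t)) (Icc s t) := by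
    rw [iteratedDerivWithin_succ']
    funext x
    rw [iteratedDerivWithin_one]
  rw [h2]
  set f' := derivWithin f (Icc s t) with hf'
  set f'' := derivWithin f' (Icc s t) with hf''
  have hf''c : ContinuousOn f'' (Icc s t) := hf'c.continuousOn_derivWithin hu le_rfl
  have hG : ∀ r ∈ Icc s t,
      HasDerivWithinAt (fun r => f r - (r - s) • f' r) (-((r - s) • f'' r)) (Icc s t) r := by
    intro r hr
    have a : HasDerivWithinAt f (f' r) (Icc s t) r := (hf1 r hr).hasDerivWithinAt
    have b : HasDerivWithinAt f' (f'' r) (Icc s t) r :=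
      ((hf'c.differentiableOn (by norm_num)) r hr).hasDerivWithinAt
    have d : HasDerivWithinAt (fun x : ℝ => x - s) 1 (Icc s t) r :=
      (hasDerivWithinAt_id r (Icc s t)).sub_const s
    refine (a.sub (d.smul b)).congr_deriv ?_
    rw [one_smul]
    abel
  have hrem : ∫ r in s..t, -((r - s) • f'' r) = f t - f s - (t - s) • f' t := by
    have hw : ContinuousOn (fun r : ℝ => r - s) (Icc s t) := by fun_prop
    rw [intervalIntegral.integral_eq_sub_of_hasDerivAt_of_le hst.le
      (fun r hr => (hG r hr).continuousWithinAt)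
      (fun r hr => (hG r (Ioo_subset_Icc_self hr)).hasDerivAt (Icc_mem_nhds hr.1 hr.2))
      ((hw.smul hf''c).neg.intervalIntegrable_of_Icc hst.le)]
    simp
    abel
  have hnorm : ‖f t - f s - (t - s) • f' t‖ ≤ ∫ r in s..t, (r - s) * ‖f'' r‖ := by
    rw [← hrem]
    refine (intervalIntegral.norm_integral_le_integral_norm hst.le).trans_eq ?_
    refine intervalIntegral.integral_congr fun r hr => ?_
    rw [uIcc_of_le hst.le] at hr
    simp [norm_smul, abs_of_nonneg (sub_nonneg.2 hr.1)]
  have hCS := sq_integral_sub_mul_le_s2 hst hf''c.norm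
  have hq : (t - s)⁻¹ • (f t - f s) - f' t = (t - s)⁻¹ • (f t - f s - (t - s) • f' t) := by
    rw [smul_sub _ (f t - f s), inv_smul_smul₀ hL.ne']
  rw [hq, norm_smul, norm_inv, Real.norm_of_nonneg hL.le, ← Real.sqrt_mul (by positivity)]
  refine Real.le_sqrt_of_sq_le ?_
  rw [mul_pow, inv_pow, inv_mul_le_iff₀ (by positivity)]
  calc _ ≤ (∫ r in s..t, (r - s) * ‖f'' r‖) ^ 2 := by gcongr
    _ ≤ _ := hCS
    _ = _ := by ring
end

section
/- Let E be a real Banach space and let s < t be real numbers. If f : ℝ → E is twice continuously differentiable on [s, t], then ‖(f(t) − f(s))/(t − s) − f′(s)‖ ≤ √((t − s)/3) · ( ∫ₛᵗ ‖f″(r)‖² dr )^{1/2}. -/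
open MeasureTheory Set

/-!
Taylor's formula at order one with integral remainder gives
`f t - f s - (t - s) f'(s) = ∫ r in s..t, (t - r) f''(r)`. Taking norms and applying the
Cauchy–Schwarz inequality (`intervalIntegral_mul_le_sqrt_mul_sqrt`) bounds the right-hand side by
`√(∫ (t - r)²) √(∫ ‖f''(r)‖²) = √((t - s)³ / 3) √(∫ ‖f''(r)‖²)`, and dividing by `t - s` yields
the constant `√((t - s) / 3)`.
-/

theorem intervalIntegral_mul_le_sqrt_mul_sqrt {a b : ℝ} (hab : a ≤ b) {u v : ℝ → ℝ}
    (hu : ContinuousOn u (Icc a b)) (hv : ContinuousOn v (Icc a b))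
    (hu0 : ∀ r ∈ Icc a b, 0 ≤ u r) (hv0 : ∀ r ∈ Icc a b, 0 ≤ v r) :
    ∫ r in a..b, u r * v r ≤ √(∫ r in a..b, u r ^ 2) * √(∫ r in a..b, v r ^ 2) := by
  have nonneg_ae : ∀ w : ℝ → ℝ, (∀ r ∈ Icc a b, 0 ≤ w r) →
      0 ≤ᵐ[volume.restrict (Ioc a b)] w := fun w hw =>
    (ae_restrict_iff' measurableSet_Ioc).2 (.of_forall fun r hr => hw r (Ioc_subset_Icc_self hr))
  have memLp_two : ∀ w : ℝ → ℝ, ContinuousOn w (Icc a b) →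
      MemLp w (ENNReal.ofReal 2) (volume.restrict (Ioc a b)) := by
    intro w hw
    have int_of_cont : ∀ g : ℝ → ℝ, ContinuousOn g (Icc a b) →
        Integrable g (volume.restrict (Ioc a b)) := fun g hg =>
      (hg.integrableOn_Icc (μ := volume)).mono_set Ioc_subset_Icc_self
    rw [ENNReal.ofReal_ofNat]
    exact (memLp_two_iff_integrable_sq (int_of_cont w hw).aestronglyMeasurable).2
      (int_of_cont _ (hw.pow 2))
  have holder := integral_mul_le_Lp_mul_Lq_of_nonneg Real.HolderConjugate.two_two
    (nonneg_ae u hu0) (nonneg_ae v hv0) (memLp_two u hu) (memLp_two v hv)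
  simpa only [intervalIntegral.integral_of_le hab, Real.sqrt_eq_rpow, Real.rpow_two] using holder

/-- Single-step forward difference estimate: the error of the difference
quotient `(f t - f s)/(t - s)` against `f'` at the left endpoint `s` is
bounded by `√((t-s)/3)` times the `L²` norm of `f''` on `[s, t]`. -/
theorem single_step_forward_difference
    (E : Type*) [NormedAddCommGroup E] [NormedSpace ℝ E] [CompleteSpace E]
    (s t : ℝ) (hst : s < t)
    (f : ℝ → E) (hf : ContDiffOn ℝ 2 f (Icc s t)) :
    ‖(t - s)⁻¹ • (f t - f s) - derivWithin f (Icc s t) s‖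
      ≤ Real.sqrt ((t - s) / 3)
        * Real.sqrt (∫ r in s..t, ‖iteratedDerivWithin 2 f (Icc s t) r‖ ^ 2) := by
  have hpos : 0 < t - s := sub_pos.2 hst
  have hcont : ContinuousOn (iteratedDerivWithin 2 f (Icc s t)) (Icc s t) :=
    hf.continuousOn_iteratedDerivWithin le_rfl (uniqueDiffOn_Icc hst)
  have taylor : f t - f s - (t - s) • derivWithin f (Icc s t) s =
      ∫ r in s..t, (t - r) • iteratedDerivWithin 2 f (Icc s t) r := by
    have h := taylor_integral_remainder (f := f) (x₀ := s) (x := t) (n := 1)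
      (by rw [uIcc_of_le hst.le]; exact_mod_cast hf)
    simpa [uIcc_of_le hst.le, taylorWithinEval_succ, iteratedDerivWithin_one, sub_sub] using h
  have weight : ∫ r in s..t, (t - r) ^ 2 = (t - s) ^ 2 * ((t - s) / 3) := by
    rw [intervalIntegral.integral_comp_sub_left (fun x => x ^ 2) t, integral_pow]
    norm_num
    ring
  have quot : (t - s)⁻¹ • (f t - f s) - derivWithin f (Icc s t) s =
      (t - s)⁻¹ • (f t - f s - (t - s) • derivWithin f (Icc s t) s) := by
    rw [smul_sub _ (f t - f s), inv_smul_smul₀ hpos.ne']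
  rw [quot, taylor, norm_smul, norm_inv, Real.norm_of_nonneg hpos.le, inv_mul_le_iff₀ hpos]
  calc ‖∫ r in s..t, (t - r) • iteratedDerivWithin 2 f (Icc s t) r‖
      ≤ ∫ r in s..t, ‖(t - r) • iteratedDerivWithin 2 f (Icc s t) r‖ :=
        intervalIntegral.norm_integral_le_integral_norm hst.le
    _ = ∫ r in s..t, (t - r) * ‖iteratedDerivWithin 2 f (Icc s t) r‖ := by
        refine intervalIntegral.integral_congr fun r hr => ?_
        rw [uIcc_of_le hst.le] at hr
        simp only [norm_smul, Real.norm_of_nonneg (sub_nonneg.2 hr.2)]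
    _ ≤ √(∫ r in s..t, (t - r) ^ 2)
          * √(∫ r in s..t, ‖iteratedDerivWithin 2 f (Icc s t) r‖ ^ 2) :=
        intervalIntegral_mul_le_sqrt_mul_sqrt hst.le (by fun_prop) hcont.norm
          (fun r hr => sub_nonneg.2 hr.2) fun r _ => norm_nonneg _
    _ = _ := by
        rw [weight, Real.sqrt_mul (sq_nonneg _), Real.sqrt_sq hpos.le, mul_assoc]
end
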